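/- arXiv:1512.03992 — 3 statements merged into one kernel-verified Lean document; each statement's English description precedes it below -/
import Mathlib

section
/- Let h : [0,∞) × Ω → ℝ be F-progressively measurable and such that the random variable h_τ : ω ↦ h(τ(ω), ω) is integrable. Then for every t ≥ 0, E[h_τ | G_t] = 1_{τ ≤ t} · h_τ + 1_{τ > t} · (Z_t)^{-1} · E[h_τ 1_{τ > t} | F_t] almost surely, where the second summand is interpreted as 0 on the (almost surely negligible) set {τ > t} ∩ {Z_t = 0}. -/
/-!
On `{τ ≤ t}` the variable `h_τ` agrees with `h` evaluated at the `G_t`-measurable time `min τ t`, so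
progressive measurability of `h` makes `1_{τ ≤ t} h_τ` `G_t`-measurable
(`stronglyMeasurable_indicator_le`).

On `A = {t < τ}` the σ-algebras `F_t` and `G_t` have the same trace, because every generator
`{τ ≤ s}` with `s ≤ t` misses `A`. Hence `E[h_τ 1_A | G_t] = f 1_A` for some `F_t`-measurable `f`
(`exists_measurable_eqOn`). Conditioning on `F_t` gives `E[h_τ 1_A | F_t] = f Z_t` by the tower and
pull-out properties, and `Z_t ≠ 0` almost surely on `A` (`ae_condExp_indicator_ne_zero`), so `f` is
`Z_t⁻¹ E[h_τ 1_A | F_t]` there. Obtaining `f` first makes integrability of the right-hand side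
automatic.
-/

open MeasureTheory ProbabilityTheory Filter Set
open scoped ENNReal

noncomputable section

/-- `F ⊔ σ({τ ≤ s} : s ≤ t)`, the enlargement of a single σ-algebra `F` by `τ` up to time `t`. -/
abbrev enlarge {Ω : Type*} (F : MeasurableSpace Ω) (τ : Ω → ℝ) (t : ℝ) : MeasurableSpace Ω :=
  F ⊔ MeasurableSpace.generateFrom {A : Set Ω | ∃ s : ℝ, s ≤ t ∧ A = {ω | τ ω ≤ s}}

lemma measurableSet_enlarge_le {Ω : Type*} (F : MeasurableSpace Ω) (τ : Ω → ℝ) {s t : ℝ}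
    (hs : s ≤ t) : MeasurableSet[enlarge F τ t] {ω | τ ω ≤ s} :=
  (le_sup_right : _ ≤ enlarge F τ t) _ (MeasurableSpace.measurableSet_generateFrom ⟨s, hs, rfl⟩)

lemma enlarge_le {Ω : Type*} {F m0 : MeasurableSpace Ω} (hF : F ≤ m0) {τ : Ω → ℝ}
    (hτ : Measurable τ) (t : ℝ) : enlarge F τ t ≤ m0 := by
  refine sup_le hF (MeasurableSpace.generateFrom_le ?_)
  rintro _ ⟨s, -, rfl⟩
  exact measurableSet_le hτ measurable_const

lemma measurable_min_enlarge {Ω : Type*} (F : MeasurableSpace Ω) (τ : Ω → ℝ) (t : ℝ) :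
    Measurable[enlarge F τ t] (fun ω => min (τ ω) t) := by
  refine @measurable_of_Iic _ _ _ _ _ (enlarge F τ t) _ _ _ _ fun s => ?_
  rcases le_or_gt t s with hts | hst
  · convert @MeasurableSet.univ _ (enlarge F τ t)
    ext ω
    simp [hts]
  · convert measurableSet_enlarge_le F τ hst.le using 1
    ext ω
    simp [hst.not_ge]

lemma stronglyMeasurable_indicator_le {Ω : Type*} (F : MeasurableSpace Ω) (τ : Ω → ℝ) (t : ℝ)
    (h : ℝ → Ω → ℝ)
    (hh : StronglyMeasurable[Subtype.instMeasurableSpace.prod F]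
      fun p : Set.Iic t × Ω => h p.1 p.2) :
    StronglyMeasurable[enlarge F τ t] (Set.indicator {ω | τ ω ≤ t} fun ω => h (τ ω) ω) := by
  have hpair : @Measurable _ _ (enlarge F τ t) (Subtype.instMeasurableSpace.prod F)
      (fun ω => ((⟨min (τ ω) t, Set.mem_Iic.2 (min_le_right _ _)⟩, ω) : Set.Iic t × Ω)) := by
    refine @Measurable.prodMk _ (enlarge F τ t) _ _ _ F _ _ ?_ ?_
    · exact @Measurable.subtype_mk _ _ (enlarge F τ t) _ _ _ (measurable_min_enlarge F τ t) _
    · exact (measurable_id'' (le_sup_left : F ≤ enlarge F τ t))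
  have hcomp := (hh.comp_measurable hpair).indicator (measurableSet_enlarge_le F τ le_rfl)
  convert hcomp using 1
  refine Set.indicator_congr fun ω hω => ?_
  have hω' : τ ω ≤ t := hω
  simp [hω']

/-- The enlargement by `τ` up to time `t` adds no information on `{t < τ}`. -/
lemma exists_measurable_eqOn {Ω : Type*} (F : MeasurableSpace Ω) (τ : Ω → ℝ) (t : ℝ)
    {u : Ω → ℝ} (hu : Measurable[enlarge F τ t] u) :
    ∃ f : Ω → ℝ, Measurable[F] f ∧ ∀ ω, t < τ ω → u ω = f ω := by
  let i : {ω // t < τ ω} → Ω := Subtype.val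
  have htrace : (enlarge F τ t).comap i ≤ F.comap i := by
    rw [enlarge, MeasurableSpace.comap_sup, MeasurableSpace.comap_generateFrom]
    refine sup_le le_rfl (MeasurableSpace.generateFrom_le ?_)
    rintro _ ⟨_, ⟨s, hs, rfl⟩, rfl⟩
    convert @MeasurableSet.empty _ (F.comap i)
    ext ω
    simpa [i] using hs.trans_lt ω.2
  have hui : Measurable[F.comap i] (u ∘ i) :=
    (hu.comp (@comap_measurable _ _ (enlarge F τ t) i)).mono htrace le_rfl
  obtain ⟨f, hf, hfu⟩ := hui.exists_eq_measurable_comp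
  exact ⟨f, hf, fun ω hω => congrFun hfu ⟨ω, hω⟩⟩

lemma ae_condExp_indicator_ne_zero {Ω : Type*} {F m0 : MeasurableSpace Ω} (P : Measure Ω)
    [IsProbabilityMeasure P] (hF : F ≤ m0) {A : Set Ω} (hA : MeasurableSet A) :
    ∀ᵐ ω ∂P, ω ∈ A → (P[A.indicator (fun _ => (1 : ℝ)) | F]) ω ≠ 0 := by
  set g := P[A.indicator (fun _ => (1 : ℝ)) | F] with hg
  have hS : MeasurableSet[F] {ω | g ω = 0} :=
    stronglyMeasurable_condExp.measurable (measurableSet_singleton 0)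
  have hint : Integrable (A.indicator (fun _ => (1 : ℝ))) P := (integrable_const 1).indicator hA
  have hI := setIntegral_condExp hF hint hS
  rw [setIntegral_congr_fun (g := fun _ => (0 : ℝ)) (hF _ hS) (fun ω hω => hω), integral_zero,
    integral_indicator_const _ hA] at hI
  have hnull : P (A ∩ {ω | g ω = 0}) = 0 := by
    have hreal : (P.restrict {ω | g ω = 0}).real A = 0 := by simpa using hI.symm
    rw [measureReal_eq_zero_iff, Measure.restrict_apply hA] at hreal
    exact hreal
  rw [ae_iff]
  convert hnull using 2
  ext ω
  simp

lemma condExp_enlarge_indicator {Ω : Type*} {F m0 : MeasurableSpace Ω} (P : Measure Ω)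
    [IsProbabilityMeasure P] (hF : F ≤ m0) {τ : Ω → ℝ} (hτ : Measurable τ) (t : ℝ)
    {X : Ω → ℝ} (hX : Integrable X P) :
    P[Set.indicator {ω | t < τ ω} X | enlarge F τ t] =ᵐ[P]
      Set.indicator {ω | t < τ ω} fun ω =>
        ((P[Set.indicator {ω | t < τ ω} (fun _ => (1 : ℝ)) | F]) ω)⁻¹ *
          (P[Set.indicator {ω | t < τ ω} X | F]) ω := by
  have hA : MeasurableSet {ω | t < τ ω} := measurableSet_lt measurable_const hτ
  have hAG : MeasurableSet[enlarge F τ t] {ω | t < τ ω} := by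
    convert (measurableSet_enlarge_le F τ (le_refl t)).compl using 1
    ext ω
    simp
  have hone : Integrable (Set.indicator {ω | t < τ ω} (fun _ => (1 : ℝ))) P :=
    (integrable_const 1).indicator hA
  obtain ⟨f, hf, hfu⟩ := exists_measurable_eqOn F τ t
    (stronglyMeasurable_condExp (m := enlarge F τ t) (μ := P) (f := X)).measurable
  have hrep : P[Set.indicator {ω | t < τ ω} X | enlarge F τ t] =ᵐ[P]
      f * Set.indicator {ω | t < τ ω} (fun _ => (1 : ℝ)) := by
    filter_upwards [condExp_indicator hX hAG] with ω hω
    rw [hω]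
    by_cases h : t < τ ω
    · simp [Set.indicator, h, hfu ω h]
    · simp [Set.indicator, h]
  have hprod : Integrable (f * Set.indicator {ω | t < τ ω} (fun _ => (1 : ℝ))) P :=
    integrable_condExp.congr hrep
  have hF_eq : P[Set.indicator {ω | t < τ ω} X | F] =ᵐ[P]
      f * P[Set.indicator {ω | t < τ ω} (fun _ => (1 : ℝ)) | F] :=
    (condExp_condExp_of_le (le_sup_left : F ≤ enlarge F τ t) (enlarge_le hF hτ t)).symm.trans
      ((condExp_congr_ae hrep).trans
        (condExp_mul_of_stronglyMeasurable_left hf.stronglyMeasurable hprod hone))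
  filter_upwards [hrep, hF_eq, ae_condExp_indicator_ne_zero P hF hA] with ω h1 h2 h3
  rw [h1]
  by_cases h : t < τ ω
  · have h3' := h3 h
    simp only [Pi.mul_apply] at h2
    simp only [Pi.mul_apply, Set.indicator, Set.mem_ofPred_eq, h, if_true, mul_one] at h2 h3' ⊢
    rw [h2]
    field_simp
  · simp [Set.indicator, h]

/-- For an `F`-progressively measurable process `h` with `h_τ` integrable,
`E[h_τ | G_t] = 1_{τ ≤ t} h_τ + 1_{τ > t} (Z_t)⁻¹ E[h_τ 1_{τ > t} | F_t]` a.s.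
(with the convention `0⁻¹ = 0`). -/
theorem conditional_expectation_of_h_tau
    {Ω : Type*} {m0 : MeasurableSpace Ω} (P : Measure Ω) [IsProbabilityMeasure P]
    (F : Filtration ℝ m0) (τ : Ω → ℝ) (hτ_meas : Measurable τ) (hτ_pos : ∀ ω, 0 < τ ω)
    (Z : ℝ → Ω → ℝ)
    (hZ : ∀ t : ℝ, Z t =ᵐ[P] P[Set.indicator {ω | t < τ ω} (fun _ => (1 : ℝ)) | F t])
    (G : ℝ → MeasurableSpace Ω)
    (hG : ∀ t : ℝ, G t = (F t : MeasurableSpace Ω) ⊔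
      MeasurableSpace.generateFrom {A : Set Ω | ∃ s : ℝ, s ≤ t ∧ A = {ω | τ ω ≤ s}})
    (h : ℝ → Ω → ℝ) (hprog : ProgMeasurable F h)
    (hint : Integrable (fun ω => h (τ ω) ω) P) (t : ℝ) (ht : 0 ≤ t) :
    P[(fun ω => h (τ ω) ω) | G t]
      =ᵐ[P] fun ω =>
        Set.indicator {ω' | τ ω' ≤ t} (fun ω' => h (τ ω') ω') ω
        + Set.indicator {ω' | t < τ ω'}
            (fun ω' => (Z t ω')⁻¹ *
              (P[Set.indicator {ω'' | t < τ ω''} (fun ω'' => h (τ ω'') ω'') | F t]) ω') ω := by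
  have hGt : G t = enlarge (F t) τ t := hG t
  rw [hGt]
  have hB : MeasurableSet {ω | τ ω ≤ t} := measurableSet_le hτ_meas measurable_const
  have hA : MeasurableSet {ω | t < τ ω} := measurableSet_lt measurable_const hτ_meas
  set X : Ω → ℝ := fun ω => h (τ ω) ω with hX
  have hsplit : X = Set.indicator {ω | τ ω ≤ t} X + Set.indicator {ω | t < τ ω} X := by
    have hc : {ω | t < τ ω} = {ω | τ ω ≤ t}ᶜ := by
      ext ω
      simp
    rw [hc, Set.indicator_self_add_compl]
  have hadd := condExp_add (hint.indicator hB) (hint.indicator hA) (enlarge (F t) τ t)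
  rw [← hsplit, condExp_of_stronglyMeasurable (enlarge_le (F.le t) hτ_meas t)
    (stronglyMeasurable_indicator_le (F t) τ t h (hprog t)) (hint.indicator hB)] at hadd
  filter_upwards [hadd, condExp_enlarge_indicator P (F.le t) hτ_meas t hint, hZ t] with ω h1 h2 h3
  rw [h1, Pi.add_apply, h2]
  simp only [Set.indicator, h3]
  rfl
end
end

section
/- Under the Cox construction with Λ having continuous paths, for every bounded F-progressively measurable process h : [0,∞) × Ω → ℝ and every t ≥ 0, E[ h_τ 1_{τ > t} | F_t ] = E[ ∫_{(t,∞)} h_s e^{−Λ_s} dΛ_s | F_t ] almost surely, where h_τ(ω) := h(τ(ω), ω) and the inner integral is, for each ω, the Lebesgue–Stieltjes integral of s ↦ h(s,ω) e^{−Λ_s(ω)} over (t,∞) with respect to the measure induced by the nondecreasing continuous function s ↦ Λ_s(ω). -/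
/-!
Let `σ(x, ω) = inf {s ≥ 0 : x ≤ Λ_s(ω)}` be the generalized inverse of the path of `Λ`, so that
`τ = σ(Θ, ·)`, and let `F_∞` be the join of the `F_u`, `u ≥ 0`. A progressively measurable `h` is
jointly measurable for `ℬ ⊗ F_∞`, and so is `σ`, because `σ(x, ω) ≤ s ↔ 0 ≤ s ∧ x ≤ Λ_s(ω)`.
Hence `h_τ 1_{τ > t} = g(Θ, ω)` with `g` jointly measurable, and independence of `Θ` from `F_∞`
gives, for `A ∈ F_t`, that `E[1_A g(Θ, ·)] = E[1_A ∫ g(x, ·) e^{-x} dx]`.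

The inner integral is computed path by path (`integral_comp_genInv`): the image of Lebesgue measure
on `(0, ∞)` under `σ(·, ω)` is the Lebesgue–Stieltjes measure `dΛ(ω)` (`map_genInv`), and
`Λ_{σ(x)} = x` by continuity, so the density `e^{-x}` becomes `e^{-Λ_s}`.
-/

open MeasureTheory ProbabilityTheory Filter Set
open scoped ENNReal

noncomputable section

/-- The Lebesgue–Stieltjes measure induced by a nondecreasing continuous function. -/
def lsMeasure (f : ℝ → ℝ) (hmono : Monotone f) (hcont : Continuous f) : Measure ℝ :=
  StieltjesFunction.measure ⟨f, hmono, fun _ => hcont.continuousWithinAt⟩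

/-- The generalized inverse of a nondecreasing function on `[0, ∞)`; it has the junk value `0`
where the level `x` is never reached. -/
def genInv (f : ℝ → ℝ) (x : ℝ) : ℝ := sInf {s : ℝ | 0 ≤ s ∧ x ≤ f s}

lemma genInv_mem {f : ℝ → ℝ} (hcont : Continuous f) (htop : Tendsto f atTop atTop) (x : ℝ) :
    0 ≤ genInv f x ∧ x ≤ f (genInv f x) := by
  have hne : {s : ℝ | 0 ≤ s ∧ x ≤ f s}.Nonempty := by
    obtain ⟨s, hs⟩ := ((eventually_ge_atTop (0 : ℝ)).and (htop.eventually_ge_atTop x)).exists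
    exact ⟨s, hs⟩
  have hcl : IsClosed {s : ℝ | 0 ≤ s ∧ x ≤ f s} :=
    (isClosed_le continuous_const continuous_id).inter (isClosed_le continuous_const hcont)
  exact hcl.csInf_mem hne ⟨0, fun s hs => hs.1⟩

lemma genInv_le_iff {f : ℝ → ℝ} (hmono : Monotone f) (hcont : Continuous f)
    (htop : Tendsto f atTop atTop) (x s : ℝ) :
    genInv f x ≤ s ↔ 0 ≤ s ∧ x ≤ f s := by
  have hm := genInv_mem hcont htop x
  refine ⟨fun h => ⟨hm.1.trans h, hm.2.trans (hmono h)⟩, fun h => ?_⟩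
  exact csInf_le ⟨0, fun s hs => hs.1⟩ h

lemma apply_genInv {f : ℝ → ℝ} (hmono : Monotone f) (hcont : Continuous f)
    (htop : Tendsto f atTop atTop) (hzero : f 0 = 0) {x : ℝ} (hx : 0 < x) :
    f (genInv f x) = x := by
  have hm := genInv_mem hcont htop x
  obtain ⟨r, hr, hrx⟩ := intermediate_value_Icc hm.1 hcont.continuousOn
    (show x ∈ Icc (f 0) (f (genInv f x)) from ⟨by rw [hzero]; exact hx.le, hm.2⟩)
  have hle : genInv f x ≤ r := (genInv_le_iff hmono hcont htop x r).2 ⟨hr.1, hrx.ge⟩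
  rw [le_antisymm hle hr.2, hrx]

lemma measurable_genInv {f : ℝ → ℝ} (hmono : Monotone f) (hcont : Continuous f)
    (htop : Tendsto f atTop atTop) : Measurable (genInv f) := by
  refine measurable_of_Iic fun s => ?_
  have : genInv f ⁻¹' Iic s = {x | 0 ≤ s ∧ x ≤ f s} := by
    ext x; exact genInv_le_iff hmono hcont htop x s
  rw [this]
  exact (MeasurableSet.const _).inter measurableSet_Iic

/-- The Lebesgue–Stieltjes measure of `f` is the image of Lebesgue measure on `(0, ∞)` under the
generalized inverse of `f`: the preimage of `(a, b]` is `(f a, f b]`. -/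
lemma map_genInv {f : ℝ → ℝ} (hmono : Monotone f) (hcont : Continuous f)
    (htop : Tendsto f atTop atTop) (hzero : ∀ s ≤ 0, f s = 0) :
    (volume.restrict (Ioi (0 : ℝ))).map (genInv f) = lsMeasure f hmono hcont := by
  symm
  have : IsLocallyFiniteMeasure (lsMeasure f hmono hcont) := by
    unfold lsMeasure; infer_instance
  refine Measure.ext_of_Ioc _ _ fun a b hab => ?_
  have hm := measurable_genInv hmono hcont htop
  have hnn : ∀ s, 0 ≤ f s := fun s => by
    rcases le_total s 0 with h | h
    · exact (hzero s h).ge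
    · exact (hzero 0 le_rfl).ge.trans (hmono h)
  have hpos : ∀ x, 0 < x → ∀ s, genInv f x ≤ s ↔ x ≤ f s := fun x hx s => by
    rw [genInv_le_iff hmono hcont htop]
    refine ⟨fun h => h.2, fun h => ⟨?_, h⟩⟩
    by_contra hs
    rw [hzero s (not_le.1 hs).le] at h
    exact absurd h (not_le.2 hx)
  have hset : genInv f ⁻¹' Ioc a b ∩ Ioi 0 = Ioc (f a) (f b) := by
    ext x
    simp only [mem_inter_iff, mem_preimage, mem_Ioc, mem_Ioi]
    constructor
    · rintro ⟨⟨h1, h2⟩, hx⟩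
      exact ⟨not_le.1 fun h => absurd ((hpos x hx a).2 h) (not_le.2 h1), (hpos x hx b).1 h2⟩
    · rintro ⟨h1, h2⟩
      have hx : 0 < x := (hnn a).trans_lt h1
      exact ⟨⟨not_le.1 fun h => absurd ((hpos x hx a).1 h) (not_le.2 h1), (hpos x hx b).2 h2⟩, hx⟩
  rw [Measure.map_apply hm measurableSet_Ioc, Measure.restrict_apply (hm measurableSet_Ioc), hset,
    Real.volume_Ioc, lsMeasure, StieltjesFunction.measure_Ioc]

lemma expMeasure_one_eq : expMeasure 1 =
    (volume.restrict (Ioi (0 : ℝ))).withDensity fun x => ENNReal.ofReal (Real.exp (-x)) := by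
  rw [restrict_Ioi_eq_restrict_Ici, ← withDensity_indicator measurableSet_Ici]
  change volume.withDensity (exponentialPDF 1) = _
  congr 1
  ext x
  rw [exponentialPDF_eq, indicator_apply]
  by_cases hx : 0 ≤ x <;> simp [hx]

lemma map_eq_expMeasure {Ω : Type*} {m0 : MeasurableSpace Ω} (P : Measure Ω)
    [IsProbabilityMeasure P] {Θ : Ω → ℝ} (hΘ : Measurable Θ)
    (hlaw : ∀ x : ℝ, 0 ≤ x → P {ω | x < Θ ω} = ENNReal.ofReal (Real.exp (-x))) :
    P.map Θ = expMeasure 1 := by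
  have := isProbabilityMeasure_expMeasure zero_lt_one
  have := Measure.isProbabilityMeasure_map (μ := P) hΘ.aemeasurable
  have key : ∀ x : ℝ, 0 ≤ x → (P.map Θ).real (Iic x) = 1 - Real.exp (-x) := fun x hx => by
    have h1 : (P.map Θ).real (Ioi x) = Real.exp (-x) := by
      rw [measureReal_def, Measure.map_apply hΘ measurableSet_Ioi]
      change (P {ω | x < Θ ω}).toReal = _
      rw [hlaw x hx, ENNReal.toReal_ofReal (Real.exp_pos _).le]
    rw [← h1, ← probReal_compl_eq_one_sub measurableSet_Ioi, compl_Ioi]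
  refine Measure.eq_of_cdf _ _ ?_
  ext x
  rw [cdf_expMeasure_eq zero_lt_one, cdf_eq_real, one_mul]
  split_ifs with hx
  · exact key x hx
  · refine le_antisymm ?_ measureReal_nonneg
    calc (P.map Θ).real (Iic x) ≤ (P.map Θ).real (Iic 0) :=
          measureReal_mono (Iic_subset_Iic.2 (not_le.1 hx).le)
      _ = 0 := by rw [key 0 le_rfl]; simp

/-- Change of variables `x = f s` along one path, for the unit exponential law. -/
lemma integral_comp_genInv {f : ℝ → ℝ} (hmono : Monotone f) (hcont : Continuous f)
    (htop : Tendsto f atTop atTop) (hzero : ∀ s ≤ 0, f s = 0) {k : ℝ → ℝ} (hk : Measurable k)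
    (t : ℝ) :
    ∫ x, (Ioi t).indicator k (genInv f x) ∂(expMeasure 1) =
      ∫ s in Ioi t, k s * Real.exp (-(f s)) ∂(lsMeasure f hmono hcont) := by
  have hm := measurable_genInv hmono hcont htop
  have hmeas : Measurable ((Ioi t).indicator fun s => k s * Real.exp (-(f s))) :=
    (hk.mul (hcont.measurable.neg.exp)).indicator measurableSet_Ioi
  rw [expMeasure_one_eq, integral_withDensity_eq_integral_toReal_smul (by fun_prop) (by simp),
    ← integral_indicator (μ := lsMeasure f hmono hcont) measurableSet_Ioi,
    ← map_genInv hmono hcont htop hzero, integral_map hm.aemeasurable hmeas.aestronglyMeasurable]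
  refine setIntegral_congr_fun measurableSet_Ioi fun x hx => ?_
  have hfx := apply_genInv hmono hcont htop (hzero 0 le_rfl) hx
  simp only [indicator_apply, hfx, smul_eq_mul, ENNReal.toReal_ofReal (Real.exp_pos _).le]
  split_ifs <;> ring

lemma measurable_genInv_uncurry {Ω : Type*} {m : MeasurableSpace Ω} {Λ : ℝ → Ω → ℝ}
    (hmeas : ∀ s, 0 ≤ s → Measurable (Λ s)) (hmono : ∀ ω, Monotone fun s => Λ s ω)
    (hcont : ∀ ω, Continuous fun s => Λ s ω)
    (htop : ∀ ω, Tendsto (fun s => Λ s ω) atTop atTop) :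
    Measurable fun p : ℝ × Ω => genInv (fun s => Λ s p.2) p.1 := by
  refine measurable_of_Iic fun s => ?_
  have : (fun p : ℝ × Ω => genInv (fun s => Λ s p.2) p.1) ⁻¹' Iic s =
      {p | 0 ≤ s ∧ p.1 ≤ Λ s p.2} := by
    ext p; exact genInv_le_iff (hmono p.2) (hcont p.2) (htop p.2) p.1 s
  rw [this]
  by_cases hs : 0 ≤ s
  · simp only [hs, true_and]
    exact measurableSet_le measurable_fst ((hmeas s hs).comp measurable_snd)
  · simp [hs]

/-- A process that is progressive for `F` is jointly measurable over any σ-algebra containing all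
`F u`, `u ≥ 0`, as the pointwise limit of the processes stopped at the times `n : ℕ`. -/
lemma measurable_uncurry_of_progressive {Ω : Type*} {m0 : MeasurableSpace Ω}
    {F : Filtration ℝ m0} {h : ℝ → Ω → ℝ} (hh : IsStronglyProgressive F h)
    (m : MeasurableSpace Ω) (hm : ∀ u : ℝ, 0 ≤ u → F u ≤ m) :
    @Measurable (ℝ × Ω) ℝ (Prod.instMeasurableSpace (m₂ := m)) _ fun p => h p.1 p.2 := by
  have hn : ∀ n : ℕ, @Measurable (ℝ × Ω) ℝ (Prod.instMeasurableSpace (m₂ := m)) _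
      fun p => h (min p.1 n) p.2 := fun n => by
    have h1 := (hh (n : ℝ)).measurable
    have h2 : @Measurable (ℝ × Ω) (Iic (n : ℝ) × Ω) (Prod.instMeasurableSpace (m₂ := m))
        (Subtype.instMeasurableSpace.prod (F n))
        fun p => (⟨min p.1 n, mem_Iic.2 (min_le_right _ _)⟩, p.2) := by
      refine @Measurable.prodMk (ℝ × Ω) (Prod.instMeasurableSpace (m₂ := m)) (Iic (n : ℝ)) Ω
        _ (F n) _ _ ?_ ?_
      · exact Measurable.subtype_mk
          ((@measurable_fst ℝ Ω _ m).min measurable_const)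
      · exact (@measurable_snd ℝ Ω _ m).mono le_rfl (hm n n.cast_nonneg)
    exact h1.comp h2
  refine @measurable_of_tendsto_metrizable (ℝ × Ω) ℝ (Prod.instMeasurableSpace (m₂ := m))
    _ _ _ _ _ _ hn ?_
  rw [tendsto_pi_nhds]
  intro p
  refine tendsto_const_nhds.congr' ?_
  filter_upwards [eventually_ge_atTop ⌈p.1⌉₊] with n hpn
  rw [min_eq_left (Nat.ceil_le.1 hpn)]

/-- The function `g` with `h_τ 1_{τ > t} = g(Θ, ω)` is jointly measurable. -/
lemma measurable_indicator_genInv {Ω : Type*} {m : MeasurableSpace Ω} {Λ : ℝ → Ω → ℝ}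
    (hmeas : ∀ s, 0 ≤ s → Measurable (Λ s)) (hmono : ∀ ω, Monotone fun s => Λ s ω)
    (hcont : ∀ ω, Continuous fun s => Λ s ω)
    (htop : ∀ ω, Tendsto (fun s => Λ s ω) atTop atTop) {h : ℝ → Ω → ℝ}
    (hh : Measurable fun p : ℝ × Ω => h p.1 p.2) (t : ℝ) :
    Measurable fun p : ℝ × Ω =>
      (Ioi t).indicator (fun s => h s p.2) (genInv (fun s => Λ s p.2) p.1) := by
  have hσ := measurable_genInv_uncurry hmeas hmono hcont htop
  have hcomp : Measurable fun p : ℝ × Ω => h (genInv (fun s => Λ s p.2) p.1) p.2 :=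
    hh.comp (hσ.prodMk measurable_snd)
  exact hcomp.indicator (hσ measurableSet_Ioi)

lemma integral_freeze {Ω Ω' : Type*} {m0 : MeasurableSpace Ω} [MeasurableSpace Ω']
    (P : Measure Ω) [IsProbabilityMeasure P] {Θ : Ω → ℝ} (hΘ : Measurable Θ)
    {Y : Ω → Ω'} (hY : Measurable Y) (hind : IndepFun Θ Y P)
    {g : ℝ × Ω' → ℝ} (hg : Measurable g) {C : ℝ} (hC : ∀ p, |g p| ≤ C) :
    ∫ ω, g (Θ ω, Y ω) ∂P = ∫ ω, ∫ x, g (x, Y ω) ∂(P.map Θ) ∂P := by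
  have := Measure.isProbabilityMeasure_map (μ := P) hΘ.aemeasurable
  have := Measure.isProbabilityMeasure_map (μ := P) hY.aemeasurable
  have hi : Integrable g ((P.map Θ).prod (P.map Y)) :=
    Integrable.of_bound hg.aestronglyMeasurable C (Eventually.of_forall hC)
  rw [← integral_map (hΘ.prodMk hY).aemeasurable hg.aestronglyMeasurable,
    (indepFun_iff_map_prod_eq_prod_map_map hΘ.aemeasurable hY.aemeasurable).1 hind,
    integral_prod_symm _ hi,
    integral_map hY.aemeasurable hi.integral_prod_right.aestronglyMeasurable]

/-- Freezing lemma: under conditioning on a σ-algebra `m` contained in `σ(Y)`, a variable `Θ`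
independent of `Y` may be integrated out against its law. -/
lemma condExp_freeze {Ω Ω' : Type*} {m m0 : MeasurableSpace Ω} [mΩ' : MeasurableSpace Ω']
    (P : Measure Ω) [IsProbabilityMeasure P] {Θ : Ω → ℝ} (hΘ : Measurable Θ)
    {Y : Ω → Ω'} (hY : Measurable Y) (hind : IndepFun Θ Y P)
    (hm : m ≤ MeasurableSpace.comap Y mΩ')
    {g : ℝ × Ω' → ℝ} (hg : Measurable g) {C : ℝ} (hC : ∀ p, |g p| ≤ C) :
    P[fun ω => g (Θ ω, Y ω) | m] =ᵐ[P] P[fun ω => ∫ x, g (x, Y ω) ∂(P.map Θ) | m] := by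
  have hm0 : m ≤ m0 := hm.trans hY.comap_le
  have := Measure.isProbabilityMeasure_map (μ := P) hΘ.aemeasurable
  have hLi : Integrable (fun ω => g (Θ ω, Y ω)) P :=
    Integrable.of_bound (hg.comp (hΘ.prodMk hY)).aestronglyMeasurable C
      (Eventually.of_forall fun ω => hC _)
  have hRi : Integrable (fun ω => ∫ x, g (x, Y ω) ∂(P.map Θ)) P := by
    have hi : Integrable (fun p : ℝ × Ω => g (p.1, Y p.2)) ((P.map Θ).prod P) :=
      Integrable.of_bound
        (hg.comp (measurable_fst.prodMk (hY.comp measurable_snd))).aestronglyMeasurable C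
        (Eventually.of_forall fun p => hC _)
    exact hi.integral_prod_right
  refine (ae_eq_condExp_of_forall_setIntegral_eq hm0 hLi
    (fun _ _ _ => integrable_condExp.integrableOn) (fun A hA _ => ?_)
    stronglyMeasurable_condExp.aestronglyMeasurable).symm
  rw [setIntegral_condExp hm0 hRi hA, ← integral_indicator (hm0 _ hA),
    ← integral_indicator (hm0 _ hA)]
  obtain ⟨B, hB, rfl⟩ := hm A hA
  -- The event is absorbed into the integrand, which stays a function of `(Θ, Y)`.
  have key := integral_freeze P hΘ hY hind (hg.indicator (measurable_snd hB)) (C := C)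
    (fun p => (norm_indicator_le_norm_self g p).trans (hC p))
  refine Eq.trans (integral_congr_ae (Eventually.of_forall fun ω => ?_)) (key.symm.trans
    (integral_congr_ae (Eventually.of_forall fun ω => ?_)))
  · by_cases hω : Y ω ∈ B <;> simp [hω]
  · by_cases hω : Y ω ∈ B <;> simp [hω]

/-- Under the Cox construction with continuous `Λ`, for every bounded `F`-progressively
measurable `h` and `t ≥ 0`:
`E[h_τ 1_{τ > t} | F_t] = E[∫_{(t,∞)} h_s e^{-Λ_s} dΛ_s | F_t]` a.s. -/
theorem cox_projection_formula
    {Ω : Type*} {m0 : MeasurableSpace Ω} (P : Measure Ω) [IsProbabilityMeasure P]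
    (F : Filtration ℝ m0)
    (Θ : Ω → ℝ) (hΘ_meas : Measurable Θ)
    (hΘ_law : ∀ x : ℝ, 0 ≤ x → P {ω | x < Θ ω} = ENNReal.ofReal (Real.exp (-x)))
    (hΘ_indep : Indep (MeasurableSpace.comap Θ inferInstance)
      (⨆ (u : ℝ) (_ : (0 : ℝ) ≤ u), (F u : MeasurableSpace Ω)) P)
    (Λ : ℝ → Ω → ℝ)
    (hΛ_adapted : ∀ t : ℝ, Measurable[F t] (Λ t))
    (hΛ_zero : ∀ ω, ∀ t : ℝ, t ≤ 0 → Λ t ω = 0)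
    (hΛ_mono : ∀ ω, Monotone fun t => Λ t ω)
    (hΛ_cont : ∀ ω, Continuous fun t => Λ t ω)
    (hΛ_top : ∀ ω, Tendsto (fun t => Λ t ω) atTop atTop)
    (τ : Ω → ℝ) (hτ : ∀ ω, τ ω = sInf {t : ℝ | 0 ≤ t ∧ Θ ω ≤ Λ t ω})
    (h : ℝ → Ω → ℝ) (hh_prog : ProgMeasurable F h)
    (hh_bdd : ∃ C : ℝ, ∀ (t : ℝ) (ω : Ω), |h t ω| ≤ C)
    (t : ℝ) (ht : 0 ≤ t) :
    P[Set.indicator {ω | t < τ ω} (fun ω => h (τ ω) ω) | F t]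
      =ᵐ[P]
    P[(fun ω => ∫ s in Set.Ioi t, h s ω * Real.exp (-(Λ s ω))
        ∂(lsMeasure (fun r => Λ r ω) (hΛ_mono ω) (hΛ_cont ω))) | F t] := by
  obtain ⟨C, hC⟩ := hh_bdd
  have hL : Set.indicator {ω | t < τ ω} (fun ω => h (τ ω) ω) = fun ω =>
      (Ioi t).indicator (fun s => h s ω) (genInv (fun s => Λ s ω) (Θ ω)) := by
    ext ω
    have : genInv (fun s => Λ s ω) (Θ ω) = τ ω := (hτ ω).symm
    rw [this]
    rfl
  have hR : (fun ω => ∫ s in Set.Ioi t, h s ω * Real.exp (-(Λ s ω))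
        ∂(lsMeasure (fun r => Λ r ω) (hΛ_mono ω) (hΛ_cont ω))) = fun ω =>
      ∫ x, (Ioi t).indicator (fun s => h s ω) (genInv (fun s => Λ s ω) x) ∂(P.map Θ) := by
    ext ω
    rw [map_eq_expMeasure P hΘ_meas hΘ_law]
    have hsec : Measurable fun s => h s ω :=
      (measurable_uncurry_of_progressive hh_prog m0 fun u _ => F.le u).comp
        measurable_prodMk_right
    exact (integral_comp_genInv (hΛ_mono ω) (hΛ_cont ω) (hΛ_top ω) (hΛ_zero ω) hsec t).symm
  have hG : (⨆ (u : ℝ) (_ : (0 : ℝ) ≤ u), (F u : MeasurableSpace Ω)) ≤ m0 :=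
    iSup₂_le fun u _ => F.le u
  have hFG : ∀ u : ℝ, 0 ≤ u → F u ≤ ⨆ (u : ℝ) (_ : (0 : ℝ) ≤ u), (F u : MeasurableSpace Ω) :=
    fun u hu => le_iSup₂ (f := fun (u : ℝ) (_ : (0 : ℝ) ≤ u) => (F u : MeasurableSpace Ω)) u hu
  have hg := @measurable_indicator_genInv Ω _ Λ
    (fun s hs => (hΛ_adapted s).mono (hFG s hs) le_rfl) hΛ_mono hΛ_cont hΛ_top h
    (measurable_uncurry_of_progressive hh_prog _ hFG) t
  rw [hL, hR]
  -- `Y` is the identity from `(Ω, 𝒜)` to `(Ω, F_∞)`.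
  refine condExp_freeze (mΩ' := ⨆ (u : ℝ) (_ : (0 : ℝ) ≤ u), (F u : MeasurableSpace Ω))
    P hΘ_meas (Y := id) hG ?_ ?_ hg (C := C) fun p => ?_
  · refine (IndepFun_iff_Indep
      (mγ := ⨆ (u : ℝ) (_ : (0 : ℝ) ≤ u), (F u : MeasurableSpace Ω)) Θ id P).2 ?_
    rw [MeasurableSpace.comap_id]
    exact hΘ_indep
  · rw [MeasurableSpace.comap_id]
    exact hFG t ht
  · exact (norm_indicator_le_norm_self (fun s => h s p.2) _).trans (hC _ _)
end
end

section
/- Under the Cox construction with Λ having continuous paths, for every bounded F-progressively measurable process h : [0,∞) × Ω → ℝ and every t ≥ 0, E[ h_τ | G_t ] = 1_{τ ≤ t} · h_τ + 1_{τ > t} · e^{Λ_t} · E[ ∫_{(t,∞)} h_s e^{−Λ_s} dΛ_s | F_t ] almost surely, where h_τ(ω) := h(τ(ω), ω) and the inner integral is, for each ω, the Lebesgue–Stieltjes integral of s ↦ h(s,ω) e^{−Λ_s(ω)} over (t,∞) with respect to the measure induced by the nondecreasing continuous function s ↦ Λ_s(ω). -/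
/-!
The idea is to integrate out the threshold `Θ`, which is independent of `F_∞`, and then to substitute
`θ = Λ_s`.

Write `T(θ, ω) = inf {s ≥ 0 | θ ≤ Λ_s(ω)}`, so that `τ = T(Θ, ·)`. Since
`T(θ, ω) ≤ s ↔ 0 ≤ s ∧ θ ≤ Λ_s(ω)`, the map `T` is jointly measurable, and for fixed `ω` it carries
Lebesgue measure on `(0, ∞)` to `dΛ(ω)` (`map_firstPassage`). As `Λ_{T(θ)} = θ`, the integral of
`h_{T(θ)}` over `θ > Λ_t` against the exponential law is `K = ∫_{(t,∞)} h_s e^{-Λ_s} dΛ_s`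
(`setIntegral_expMeasure_firstPassage`); this also shows that `K` is measurable and
`|K| ≤ C e^{-Λ_t}`.

On `{t < τ} = {Λ_t < Θ}` every set of `G_t` agrees with a set `B` of `F_t` (`exists_trace_eq`), so it
suffices to compare integrals over `B ∩ {t < τ}`. Integrating out `Θ` (`setIntegral_lt_threshold`)
gives `∫_B K` for `h_τ`, and for `e^{Λ_t} E[K | F_t]` it gives
`∫_B e^{-Λ_t} e^{Λ_t} E[K | F_t] = ∫_B K`. On `{τ ≤ t}` the variable `h_τ = h_{τ ∧ t}` is
`G_t`-measurable by progressive measurability.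
-/

open MeasureTheory ProbabilityTheory Filter Set
open scoped ENNReal

noncomputable section

/-! ### First passage times and the substitution `θ = f s` -/

/-- The first time `t ≥ 0` at which `f` reaches the level `θ`. -/
def firstPassage (f : ℝ → ℝ) (θ : ℝ) : ℝ := sInf {t : ℝ | 0 ≤ t ∧ θ ≤ f t}

lemma firstPassage_mem {f : ℝ → ℝ} (hcont : Continuous f) (htop : Tendsto f atTop atTop) (θ : ℝ) :
    0 ≤ firstPassage f θ ∧ θ ≤ f (firstPassage f θ) := by
  have hne : {t : ℝ | 0 ≤ t ∧ θ ≤ f t}.Nonempty :=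
    ((eventually_ge_atTop 0).and (htop.eventually_ge_atTop θ)).exists
  have hcl : IsClosed {t : ℝ | 0 ≤ t ∧ θ ≤ f t} :=
    (isClosed_le continuous_const continuous_id).inter (isClosed_le continuous_const hcont)
  exact hcl.csInf_mem hne ⟨0, fun x hx => hx.1⟩

lemma firstPassage_le_iff {f : ℝ → ℝ} (hmono : Monotone f) (hcont : Continuous f)
    (htop : Tendsto f atTop atTop) (θ s : ℝ) :
    firstPassage f θ ≤ s ↔ 0 ≤ s ∧ θ ≤ f s := by
  have hmem := firstPassage_mem hcont htop θ
  refine ⟨fun h => ⟨hmem.1.trans h, hmem.2.trans (hmono h)⟩, fun h => ?_⟩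
  exact csInf_le ⟨0, fun x hx => hx.1⟩ h

lemma lt_firstPassage_iff {f : ℝ → ℝ} (hmono : Monotone f) (hcont : Continuous f)
    (htop : Tendsto f atTop atTop) {θ s : ℝ} (hs : 0 ≤ s) :
    s < firstPassage f θ ↔ f s < θ := by
  rw [← not_le, firstPassage_le_iff hmono hcont htop, ← not_le]
  tauto

/-- By continuity, a positive level is attained exactly at its first passage time. -/
lemma apply_firstPassage {f : ℝ → ℝ} (hmono : Monotone f) (hcont : Continuous f)
    (htop : Tendsto f atTop atTop) (hzero : f 0 = 0) {θ : ℝ} (hθ : 0 < θ) :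
    f (firstPassage f θ) = θ := by
  have hmem := firstPassage_mem hcont htop θ
  refine le_antisymm ?_ hmem.2
  obtain ⟨s, hs, hfs⟩ := intermediate_value_Icc hmem.1 hcont.continuousOn
    (show θ ∈ Icc (f 0) (f (firstPassage f θ)) from ⟨hzero.le.trans hθ.le, hmem.2⟩)
  have := (firstPassage_le_iff hmono hcont htop θ s).2 ⟨hs.1, hfs.ge⟩
  exact (hmono this).trans hfs.le

lemma measurable_firstPassage {f : ℝ → ℝ} (hmono : Monotone f) (hcont : Continuous f)
    (htop : Tendsto f atTop atTop) : Measurable (firstPassage f) := by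
  refine measurable_of_Iic fun s => ?_
  have : firstPassage f ⁻¹' Iic s = {θ | 0 ≤ s ∧ θ ≤ f s} := by
    ext θ; exact firstPassage_le_iff hmono hcont htop θ s
  rw [this]
  exact (MeasurableSet.const _).inter measurableSet_Iic

/-- The Lebesgue–Stieltjes measure of `f` is the image of Lebesgue measure on the positive levels
under the first passage time: both give `Ioc a b` the mass `f b - f a`. -/
lemma map_firstPassage {f : ℝ → ℝ} (hmono : Monotone f) (hcont : Continuous f)
    (htop : Tendsto f atTop atTop) (hzero : ∀ t ≤ 0, f t = 0) :
    (volume.restrict (Ioi 0)).map (firstPassage f) = lsMeasure f hmono hcont := by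
  symm
  have : IsLocallyFiniteMeasure (lsMeasure f hmono hcont) := by
    unfold lsMeasure; infer_instance
  refine Measure.ext_of_Ioc _ _ fun a b hab => ?_
  have hf0 : ∀ s, 0 ≤ f s := fun s => by
    rcases le_total s 0 with hs | hs
    · exact (hzero s hs).ge
    · exact (hzero 0 le_rfl).ge.trans (hmono hs)
  have hle : ∀ θ, 0 < θ → ∀ s, (firstPassage f θ ≤ s ↔ θ ≤ f s) := fun θ hθ s => by
    rw [firstPassage_le_iff hmono hcont htop]
    refine ⟨fun h => h.2, fun h => ⟨?_, h⟩⟩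
    by_contra hs
    rw [hzero s (not_le.1 hs).le] at h
    exact absurd h (not_le.2 hθ)
  have hset : firstPassage f ⁻¹' Ioc a b ∩ Ioi 0 = Ioc (f a) (f b) := by
    ext θ
    simp only [mem_inter_iff, mem_preimage, mem_Ioc, mem_Ioi]
    constructor
    · rintro ⟨⟨h1, h2⟩, h3⟩
      exact ⟨not_le.1 fun h => absurd ((hle θ h3 a).2 h) (not_le.2 h1), (hle θ h3 b).1 h2⟩
    · rintro ⟨h1, h2⟩
      have h3 : 0 < θ := (hf0 a).trans_lt h1
      exact ⟨⟨not_le.1 fun h => absurd ((hle θ h3 a).1 h) (not_le.2 h1), (hle θ h3 b).2 h2⟩, h3⟩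
  have hT := measurable_firstPassage hmono hcont htop
  rw [Measure.map_apply hT measurableSet_Ioc, Measure.restrict_apply (hT measurableSet_Ioc), hset,
    Real.volume_Ioc, lsMeasure, StieltjesFunction.measure_Ioc]

lemma integral_expMeasure_one (φ : ℝ → ℝ) :
    ∫ θ, φ θ ∂(expMeasure 1) = ∫ θ in Ioi 0, φ θ * Real.exp (-θ) := by
  have h1 : expMeasure 1 = volume.withDensity (exponentialPDF 1) := rfl
  have hm : Measurable (exponentialPDF 1) := (measurable_exponentialPDFReal 1).ennreal_ofReal
  rw [h1, integral_withDensity_eq_integral_toReal_smul hm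
    (ae_of_all _ fun x => ENNReal.ofReal_lt_top), ← integral_Ici_eq_integral_Ioi,
    ← integral_indicator measurableSet_Ici]
  refine integral_congr_ae (ae_of_all _ fun θ => ?_)
  by_cases hθ : 0 ≤ θ
  · simp [exponentialPDF_of_nonneg hθ, hθ, ENNReal.toReal_ofReal (Real.exp_pos _).le, mul_comm]
  · simp [exponentialPDF_of_neg (not_le.1 hθ), hθ]

/-- The substitution `θ = f s`, under which `e^{-θ} dθ` becomes `e^{-f s} df(s)`. -/
lemma setIntegral_expMeasure_firstPassage {f : ℝ → ℝ} (hmono : Monotone f) (hcont : Continuous f)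
    (htop : Tendsto f atTop atTop) (hzero : ∀ t ≤ 0, f t = 0) {g : ℝ → ℝ} (hg : Measurable g)
    {t : ℝ} (ht : 0 ≤ t) :
    ∫ θ in Ioi (f t), g (firstPassage f θ) ∂(expMeasure 1)
      = ∫ s in Ioi t, g s * Real.exp (-(f s)) ∂(lsMeasure f hmono hcont) := by
  have hT := measurable_firstPassage hmono hcont htop
  rw [← integral_indicator measurableSet_Ioi, ← integral_indicator measurableSet_Ioi,
    integral_expMeasure_one, ← map_firstPassage hmono hcont htop hzero,
    integral_map hT.aemeasurable]
  · refine setIntegral_congr_fun measurableSet_Ioi fun θ hθ => ?_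
    have h1 := lt_firstPassage_iff hmono hcont htop ht (θ := θ)
    have h2 := apply_firstPassage hmono hcont htop (hzero 0 le_rfl) hθ
    by_cases h : f t < θ
    · simp [indicator, h1.2 h, h, h2]
    · simp [indicator, mt h1.1 h, h]
  · refine (Measurable.indicator ?_ measurableSet_Ioi).aestronglyMeasurable
    exact hg.mul (Real.measurable_exp.comp hcont.measurable.neg)

/-! ### The exponential law and integration of an independent variable -/

lemma expMeasure_one_Ioi {x : ℝ} (hx : 0 ≤ x) : (expMeasure 1).real (Ioi x) = Real.exp (-x) := by
  have := isProbabilityMeasure_expMeasure one_pos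
  have h := cdf_expMeasure_eq one_pos x
  rw [cdf_eq_real, if_pos hx, one_mul] at h
  rw [← compl_Iic, probReal_compl_eq_one_sub measurableSet_Iic, h]
  ring

/-- Integrating out a variable `Θ` independent of `X`. -/
lemma integral_indepFun {Ω Ω' : Type*} {m0 : MeasurableSpace Ω} {m' : MeasurableSpace Ω'}
    (P : Measure Ω) [IsProbabilityMeasure P] {Θ : Ω → ℝ} {X : Ω → Ω'} (hΘ : Measurable Θ)
    (hX : Measurable X) (hind : IndepFun Θ X P) {φ : ℝ × Ω' → ℝ} (hφ : Measurable φ)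
    (hint : Integrable (fun ω => φ (Θ ω, X ω)) P) :
    ∫ ω, φ (Θ ω, X ω) ∂P = ∫ ω, ∫ θ, φ (θ, X ω) ∂(P.map Θ) ∂P := by
  have := Measure.isProbabilityMeasure_map (μ := P) hΘ.aemeasurable
  have := Measure.isProbabilityMeasure_map (μ := P) hX.aemeasurable
  have hpair : Measurable fun ω => (Θ ω, X ω) := hΘ.prodMk hX
  have hmap := hind.map_prod_eq_prod_map_map hΘ.aemeasurable hX.aemeasurable
  have hint' : Integrable φ ((P.map Θ).prod (P.map X)) := by
    rw [← hmap]
    exact (integrable_map_measure hφ.aestronglyMeasurable hpair.aemeasurable).2 hint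
  rw [← integral_map hpair.aemeasurable hφ.aestronglyMeasurable, hmap, integral_prod_symm _ hint',
    integral_map hX.aemeasurable]
  exact (hφ.stronglyMeasurable.integral_prod_left').aestronglyMeasurable

/-! ### Joint measurability and traces of σ-algebras -/

lemma measurable_firstPassage_prod {Ω : Type*} {m : MeasurableSpace Ω} {Λ : ℝ → Ω → ℝ}
    (hΛ : ∀ t, Measurable (Λ t)) (hmono : ∀ ω, Monotone fun t => Λ t ω)
    (hcont : ∀ ω, Continuous fun t => Λ t ω)
    (htop : ∀ ω, Tendsto (fun t => Λ t ω) atTop atTop) :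
    Measurable fun p : ℝ × Ω => firstPassage (fun t => Λ t p.2) p.1 := by
  refine measurable_of_Iic fun s => ?_
  have : (fun p : ℝ × Ω => firstPassage (fun t => Λ t p.2) p.1) ⁻¹' Iic s
      = {p | 0 ≤ s ∧ p.1 ≤ Λ s p.2} := by
    ext p; exact firstPassage_le_iff (hmono p.2) (hcont p.2) (htop p.2) p.1 s
  rw [this]
  exact (MeasurableSet.const _).inter
    (measurableSet_le measurable_fst ((hΛ s).comp measurable_snd))

/-- If `h` restricted to times `≤ n` is jointly measurable for every `n`, then so is `h`, being the
pointwise limit of `h (min s n)`. -/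
lemma measurable_uncurry_of_Iic {Ω : Type*} {m : MeasurableSpace Ω} {h : ℝ → Ω → ℝ}
    (hh : ∀ n : ℝ, Measurable fun p : Iic n × Ω => h p.1 p.2) :
    Measurable fun p : ℝ × Ω => h p.1 p.2 := by
  refine measurable_of_tendsto_metrizable
    (f := fun (n : ℕ) (p : ℝ × Ω) => h (min p.1 n) p.2) (fun n => ?_) ?_
  · have : Measurable fun p : ℝ × Ω =>
        ((⟨min p.1 n, mem_Iic.2 (min_le_right _ _)⟩ : Iic (n : ℝ)), p.2) :=
      (Measurable.subtype_mk (by fun_prop)).prodMk measurable_snd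
    exact (hh n).comp this
  · rw [tendsto_pi_nhds]
    intro p
    refine tendsto_const_nhds.congr' ?_
    obtain ⟨N, hN⟩ := exists_nat_ge p.1
    filter_upwards [eventually_ge_atTop N] with n hn
    rw [min_eq_left (hN.trans (by exact_mod_cast hn))]

/-- The information added to `m` by the sets `{τ ≤ s}`, `s ≤ t`, is trivial on `{t < τ}`. -/
lemma exists_trace_eq {Ω : Type*} (m : MeasurableSpace Ω) (τ : Ω → ℝ) (t : ℝ) {A : Set Ω}
    (hA : MeasurableSet[m ⊔ MeasurableSpace.generateFrom
      {A : Set Ω | ∃ s : ℝ, s ≤ t ∧ A = {ω | τ ω ≤ s}}] A) :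
    ∃ B, MeasurableSet[m] B ∧ A ∩ {ω | t < τ ω} = B ∩ {ω | t < τ ω} := by
  let v : {ω | t < τ ω} → Ω := Subtype.val
  have hle : m ⊔ MeasurableSpace.generateFrom {A : Set Ω | ∃ s : ℝ, s ≤ t ∧ A = {ω | τ ω ≤ s}}
      ≤ (m.comap v).map v := by
    refine sup_le MeasurableSpace.le_map_comap (MeasurableSpace.generateFrom_le ?_)
    rintro _ ⟨s, hs, rfl⟩
    have : v ⁻¹' {ω | τ ω ≤ s} = ∅ := by
      ext ω
      simpa [v] using hs.trans_lt ω.2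
    change MeasurableSet[m.comap v] (v ⁻¹' {ω | τ ω ≤ s})
    rw [this]
    exact MeasurableSet.empty
  obtain ⟨B, hB, hAB⟩ := hle A hA
  refine ⟨B, hB, ?_⟩
  rw [inter_comm A, inter_comm B]
  exact (Subtype.preimage_val_eq_preimage_val_iff _ _ _).1 hAB.symm

/-! ### The conditional expectation formula -/

/-- Integrating out the exponential threshold `Θ`, independent of `m`, on the event `c < Θ` with an
`m`-measurable level `c`. -/
lemma setIntegral_lt_threshold {Ω : Type*} {m m0 : MeasurableSpace Ω} (hm : m ≤ m0) (P : Measure Ω)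
    [IsProbabilityMeasure P] {Θ : Ω → ℝ} (hΘ : Measurable Θ)
    (hlaw : ∀ x : ℝ, 0 ≤ x → P {ω | x < Θ ω} = ENNReal.ofReal (Real.exp (-x)))
    (hind : Indep (MeasurableSpace.comap Θ inferInstance) m P)
    {c : Ω → ℝ} (hc : Measurable[m] c) {B : Set Ω} (hB : MeasurableSet[m] B)
    {ψ : ℝ × Ω → ℝ} (hψ : Measurable[(inferInstance : MeasurableSpace ℝ).prod m] ψ)
    (hint : Integrable (fun ω => ψ (Θ ω, ω)) P) :
    ∫ ω in B ∩ {ω | c ω < Θ ω}, ψ (Θ ω, ω) ∂P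
      = ∫ ω in B, ∫ θ in Ioi (c ω), ψ (θ, ω) ∂(expMeasure 1) ∂P := by
  let D : Set (ℝ × Ω) := {p | p.2 ∈ B ∧ c p.2 < p.1}
  have hD : MeasurableSet[(inferInstance : MeasurableSpace ℝ).prod m] D := by
    refine MeasurableSet.inter ?_ ?_
    · exact (@measurable_snd ℝ Ω _ m) hB
    · exact measurableSet_lt (hc.comp (@measurable_snd ℝ Ω _ m)) (@measurable_fst ℝ Ω _ m)
  have hDS : MeasurableSet (B ∩ {ω | c ω < Θ ω}) :=
    (hm _ hB).inter (measurableSet_lt (hc.mono hm le_rfl) hΘ)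
  have hindep : @IndepFun Ω ℝ Ω m0 _ m Θ id P := by
    refine (@IndepFun_iff_Indep Ω ℝ Ω m0 _ m Θ id P).2 ?_
    rwa [MeasurableSpace.comap_id]
  have heq : (fun ω => D.indicator ψ (Θ ω, ω))
      = (B ∩ {ω | c ω < Θ ω}).indicator fun ω => ψ (Θ ω, ω) := rfl
  have h := @integral_indepFun Ω Ω m0 m P _ Θ id hΘ (measurable_id'' hm) hindep
    (D.indicator ψ) (hψ.indicator hD) (by
      change Integrable (fun ω => D.indicator ψ (Θ ω, ω)) P
      rw [heq]; exact hint.indicator hDS)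
  simp only [id] at h
  rw [heq, integral_indicator hDS, map_eq_expMeasure P hΘ hlaw] at h
  rw [h, ← integral_indicator (hm _ hB)]
  congr 1
  ext ω
  by_cases hω : ω ∈ B
  · rw [indicator_of_mem hω, ← integral_indicator measurableSet_Ioi]
    congr 1
    ext θ
    simp [D, indicator, hω]
  · simp [D, indicator, hω]

/-- The terminal σ-algebra `F_∞` of the filtration. -/
@[reducible]
def terminalSigma {Ω : Type*} {m0 : MeasurableSpace Ω} (F : Filtration ℝ m0) : MeasurableSpace Ω :=
  ⨆ (u : ℝ) (_ : (0 : ℝ) ≤ u), (F u : MeasurableSpace Ω)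

/-- Under the Cox construction with continuous `Λ`, for every bounded `F`-progressively
measurable `h` and `t ≥ 0`:
`E[h_τ | G_t] = 1_{τ ≤ t} h_τ + 1_{τ > t} e^{Λ_t} E[∫_{(t,∞)} h_s e^{-Λ_s} dΛ_s | F_t]` a.s. -/
theorem cox_conditional_expectation_formula
    {Ω : Type*} {m0 : MeasurableSpace Ω} (P : Measure Ω) [IsProbabilityMeasure P]
    (F : Filtration ℝ m0)
    (Θ : Ω → ℝ) (hΘ_meas : Measurable Θ)
    (hΘ_law : ∀ x : ℝ, 0 ≤ x → P {ω | x < Θ ω} = ENNReal.ofReal (Real.exp (-x)))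
    (hΘ_indep : Indep (MeasurableSpace.comap Θ inferInstance)
      (⨆ (u : ℝ) (_ : (0 : ℝ) ≤ u), (F u : MeasurableSpace Ω)) P)
    (Λ : ℝ → Ω → ℝ)
    (hΛ_adapted : ∀ t : ℝ, Measurable[F t] (Λ t))
    (hΛ_zero : ∀ ω, ∀ t : ℝ, t ≤ 0 → Λ t ω = 0)
    (hΛ_mono : ∀ ω, Monotone fun t => Λ t ω)
    (hΛ_cont : ∀ ω, Continuous fun t => Λ t ω)
    (hΛ_top : ∀ ω, Tendsto (fun t => Λ t ω) atTop atTop)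
    (τ : Ω → ℝ) (hτ : ∀ ω, τ ω = sInf {t : ℝ | 0 ≤ t ∧ Θ ω ≤ Λ t ω})
    (G : ℝ → MeasurableSpace Ω)
    (hG : ∀ t : ℝ, G t = (F t : MeasurableSpace Ω) ⊔
      MeasurableSpace.generateFrom {A : Set Ω | ∃ s : ℝ, s ≤ t ∧ A = {ω | τ ω ≤ s}})
    (h : ℝ → Ω → ℝ) (hh_prog : ProgMeasurable F h)
    (hh_bdd : ∃ C : ℝ, ∀ (t : ℝ) (ω : Ω), |h t ω| ≤ C)
    (t : ℝ) (ht : 0 ≤ t) :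
    P[(fun ω => h (τ ω) ω) | G t]
      =ᵐ[P] fun ω =>
        Set.indicator {ω' | τ ω' ≤ t} (fun ω' => h (τ ω') ω') ω
        + Set.indicator {ω' | t < τ ω'}
            (fun ω' => Real.exp (Λ t ω') *
              (P[(fun ω'' => ∫ s in Set.Ioi t, h s ω'' * Real.exp (-(Λ s ω''))
                  ∂(lsMeasure (fun r => Λ r ω'') (hΛ_mono ω'') (hΛ_cont ω''))) | F t]) ω') ω := by
  obtain ⟨C, hC⟩ := hh_bdd
  have hF_le : ∀ u, F u ≤ terminalSigma F := fun u =>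
    (F.mono (le_max_left u 0)).trans
      (le_iSup₂_of_le (f := fun (u : ℝ) (_ : (0 : ℝ) ≤ u) => (F u : MeasurableSpace Ω))
        (max u 0) (le_max_right _ _) le_rfl)
  have hInf_le : terminalSigma F ≤ m0 := iSup₂_le fun u _ => F.le u
  have hτ' : ∀ ω, τ ω = firstPassage (fun s => Λ s ω) (Θ ω) := hτ
  have hτ_lt : ∀ ω, t < τ ω ↔ Λ t ω < Θ ω := fun ω => by
    rw [hτ', lt_firstPassage_iff (hΛ_mono ω) (hΛ_cont ω) (hΛ_top ω) ht]
  have hS_eq : {ω | t < τ ω} = {ω | Λ t ω < Θ ω} := by ext ω; exact hτ_lt ω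
  have hΛ_nonneg : ∀ ω, 0 ≤ Λ t ω := fun ω => (hΛ_zero ω 0 le_rfl).ge.trans (hΛ_mono ω ht)
  -- joint measurability with respect to `ℬ(ℝ) ⊗ F_∞`
  have hh_joint : Measurable[(inferInstance : MeasurableSpace ℝ).prod (terminalSigma F)]
      fun p : ℝ × Ω => h p.1 p.2 :=
    @measurable_uncurry_of_Iic Ω (terminalSigma F) h fun n =>
      (hh_prog n).measurable.mono (sup_le_sup le_rfl (MeasurableSpace.comap_mono (hF_le n))) le_rfl
  have hT_joint : Measurable[(inferInstance : MeasurableSpace ℝ).prod (terminalSigma F)]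
      fun p : ℝ × Ω => firstPassage (fun s => Λ s p.2) p.1 :=
    @measurable_firstPassage_prod Ω (terminalSigma F) Λ (fun s => (hΛ_adapted s).mono (hF_le s) le_rfl)
      hΛ_mono hΛ_cont hΛ_top
  have hψ : Measurable[(inferInstance : MeasurableSpace ℝ).prod (terminalSigma F)]
      fun p : ℝ × Ω => h (firstPassage (fun s => Λ s p.2) p.1) p.2 :=
    hh_joint.comp (hT_joint.prodMk (@measurable_snd ℝ Ω _ (terminalSigma F)))
  have hprod_le : (inferInstance : MeasurableSpace ℝ).prod (terminalSigma F)
      ≤ (inferInstance : MeasurableSpace ℝ).prod m0 :=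
    sup_le_sup le_rfl (MeasurableSpace.comap_mono hInf_le)
  have hΘid : Measurable fun ω => (Θ ω, ω) := hΘ_meas.prodMk measurable_id
  have hτ_meas : Measurable τ := by
    have := (hT_joint.mono hprod_le le_rfl).comp hΘid
    exact (funext hτ' : τ = _) ▸ this
  have hhτ_meas : Measurable fun ω => h (τ ω) ω := by
    have := (hψ.mono hprod_le le_rfl).comp hΘid
    simpa only [hτ', Function.comp_def] using this
  have hhτ_int : Integrable (fun ω => h (τ ω) ω) P :=
    Integrable.of_bound hhτ_meas.aestronglyMeasurable C (ae_of_all _ fun ω => hC _ _)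
  have hSt : MeasurableSet {ω | t < τ ω} := measurableSet_lt measurable_const hτ_meas
  -- the inner integral, rewritten as an integral over the levels of `Λ`
  set K : Ω → ℝ := fun ω => ∫ s in Set.Ioi t, h s ω * Real.exp (-(Λ s ω))
    ∂(lsMeasure (fun r => Λ r ω) (hΛ_mono ω) (hΛ_cont ω)) with hK
  have hK_eq : ∀ ω, ∫ θ in Ioi (Λ t ω), h (firstPassage (fun s => Λ s ω) θ) ω ∂(expMeasure 1)
      = K ω := fun ω =>
    setIntegral_expMeasure_firstPassage (hΛ_mono ω) (hΛ_cont ω) (hΛ_top ω) (hΛ_zero ω)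
      (g := fun s => h s ω) (hh_joint.comp (@measurable_prodMk_right ℝ Ω _ (terminalSigma F) ω)) ht
  have hexp_prob := isProbabilityMeasure_expMeasure one_pos
  have hΛt : Measurable (Λ t) := (hΛ_adapted t).mono (F.le t) le_rfl
  have hK_meas : StronglyMeasurable K := by
    have hmeas : Measurable ({p : ℝ × Ω | Λ t p.2 < p.1}.indicator
        fun p : ℝ × Ω => h (firstPassage (fun s => Λ s p.2) p.1) p.2) :=
      (hψ.mono hprod_le le_rfl).indicator
        (measurableSet_lt (hΛt.comp measurable_snd) measurable_fst)
    have := hmeas.stronglyMeasurable.integral_prod_left' (μ := expMeasure 1)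
    convert this using 2 with ω
    rw [← hK_eq, ← integral_indicator measurableSet_Ioi]
    rfl
  have hK_bound : ∀ ω, |K ω| ≤ C * Real.exp (-(Λ t ω)) := fun ω => by
    rw [← hK_eq, ← expMeasure_one_Ioi (hΛ_nonneg ω)]
    exact norm_setIntegral_le_of_norm_le_const
      (f := fun θ => h (firstPassage (fun s => Λ s ω) θ) ω) (measure_lt_top _ _) fun θ _ => hC _ _
  have hC0 : ∀ _ : Ω, 0 ≤ C := fun ω => (abs_nonneg _).trans (hC 0 ω)
  have hK_int : Integrable K P := by
    refine Integrable.of_bound hK_meas.aestronglyMeasurable C (ae_of_all _ fun ω => ?_)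
    refine (hK_bound ω).trans (mul_le_of_le_one_right (hC0 ω) ?_)
    simpa using hΛ_nonneg ω
  set Z : Ω → ℝ := fun ω => Real.exp (Λ t ω) * (P[K | F t]) ω with hZ
  have hexp_meas : Measurable[F t] fun ω => Real.exp (Λ t ω) :=
    Real.measurable_exp.comp (hΛ_adapted t)
  have hZ_meas : Measurable[F t] Z := hexp_meas.mul stronglyMeasurable_condExp.measurable
  have hZ_int : Integrable Z P := by
    have hprod : Integrable ((fun ω => Real.exp (Λ t ω)) * K) P := by
      refine Integrable.of_bound
        ((hexp_meas.mono (F.le t) le_rfl).aestronglyMeasurable.mul hK_meas.aestronglyMeasurable) C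
        (ae_of_all _ fun ω => ?_)
      rw [Pi.mul_apply, norm_mul, Real.norm_of_nonneg (Real.exp_pos _).le, Real.norm_eq_abs]
      calc Real.exp (Λ t ω) * |K ω| ≤ Real.exp (Λ t ω) * (C * Real.exp (-(Λ t ω))) := by
            gcongr; exact hK_bound ω
        _ = C := by rw [mul_left_comm, ← Real.exp_add]; simp
    exact integrable_condExp.congr
      (condExp_mul_of_stronglyMeasurable_left hexp_meas.stronglyMeasurable hprod hK_int)
  -- both `h_τ` and `Z` have the same integral as `K` over the traces of `F_t`-sets on `{t < τ}`
  have hcΛ : Measurable[terminalSigma F] (Λ t) := (hΛ_adapted t).mono (hF_le t) le_rfl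
  have key1 : ∀ B, MeasurableSet[F t] B →
      ∫ ω in B ∩ {ω | t < τ ω}, h (τ ω) ω ∂P = ∫ ω in B, K ω ∂P := fun B hB => by
    have := setIntegral_lt_threshold hInf_le P hΘ_meas hΘ_law hΘ_indep hcΛ (hF_le t B hB) hψ
      (by simpa only [hτ'] using hhτ_int)
    simp only [hK_eq] at this
    rw [hS_eq, ← this]
    simp only [hτ']
  have key2 : ∀ B, MeasurableSet[F t] B →
      ∫ ω in B ∩ {ω | t < τ ω}, Z ω ∂P = ∫ ω in B, K ω ∂P := fun B hB => by
    have := setIntegral_lt_threshold hInf_le P hΘ_meas hΘ_law hΘ_indep hcΛ (hF_le t B hB)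
      (ψ := fun p => Z p.2) ((hZ_meas.mono (hF_le t) le_rfl).comp (@measurable_snd ℝ Ω _ (terminalSigma F)))
      hZ_int
    rw [hS_eq, this, ← setIntegral_condExp (F.le t) hK_int hB]
    refine setIntegral_congr_fun (F.le t B hB) fun ω _ => ?_
    simp only [setIntegral_const, smul_eq_mul, expMeasure_one_Ioi (hΛ_nonneg ω), hZ]
    rw [← mul_assoc, ← Real.exp_add]
    simp
  -- measurability with respect to `G t`
  have hFG : F t ≤ G t := by rw [hG]; exact le_sup_left
  have hτG : ∀ s ≤ t, MeasurableSet[G t] {ω | τ ω ≤ s} := fun s hs => by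
    rw [hG]
    exact (le_sup_right : _ ≤ (F t : MeasurableSpace Ω) ⊔ _) _
      (MeasurableSpace.measurableSet_generateFrom ⟨s, hs, rfl⟩)
  have hG_le : G t ≤ m0 := by
    rw [hG]
    refine sup_le (F.le t) (MeasurableSpace.generateFrom_le ?_)
    rintro _ ⟨s, _, rfl⟩
    exact hτ_meas measurableSet_Iic
  have hSG : MeasurableSet[G t] {ω | t < τ ω} := by
    have : {ω | t < τ ω} = {ω | τ ω ≤ t}ᶜ := by ext; simp
    rw [this]
    exact (hτG t le_rfl).compl
  have hminG : Measurable[G t] fun ω => min (τ ω) t := by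
    refine measurable_of_Iic fun s => ?_
    by_cases hs : t ≤ s
    · have : (fun ω => min (τ ω) t) ⁻¹' Iic s = univ := by ext; simp [hs]
      rw [this]; exact MeasurableSet.univ
    · have : (fun ω => min (τ ω) t) ⁻¹' Iic s = {ω | τ ω ≤ s} := by ext; simp [hs]
      rw [this]; exact hτG s (not_le.1 hs).le
  have hstopG : Measurable[G t] fun ω => h (min (τ ω) t) ω := by
    have hpair : @Measurable Ω (Iic t × Ω) (G t) (Subtype.instMeasurableSpace.prod (F t))
        fun ω => (⟨min (τ ω) t, mem_Iic.2 (min_le_right _ _)⟩, ω) :=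
      Measurable.prodMk (Measurable.subtype_mk hminG) (measurable_id'' hFG)
    exact (hh_prog t).measurable.comp hpair
  have hind1 : {ω' | τ ω' ≤ t}.indicator (fun ω' => h (τ ω') ω')
      = {ω' | τ ω' ≤ t}.indicator (fun ω' => h (min (τ ω') t) ω') := by
    refine indicator_congr fun ω hω => ?_
    rw [min_eq_left hω]
  have hg_meas : Measurable[G t] fun ω => {ω' | τ ω' ≤ t}.indicator (fun ω' => h (τ ω') ω') ω
      + {ω' | t < τ ω'}.indicator Z ω := by
    rw [hind1]
    exact (hstopG.indicator (hτG t le_rfl)).add ((hZ_meas.mono hFG le_rfl).indicator hSG)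
  have hi1 : Integrable ({ω' | τ ω' ≤ t}.indicator fun ω' => h (τ ω') ω') P :=
    hhτ_int.indicator (hG_le _ (hτG t le_rfl))
  have hi2 : Integrable ({ω' | t < τ ω'}.indicator Z) P := hZ_int.indicator hSt
  have hi3 : Integrable ({ω' | t < τ ω'}.indicator fun ω' => h (τ ω') ω') P :=
    hhτ_int.indicator hSt
  refine (ae_eq_condExp_of_forall_setIntegral_eq hG_le hhτ_int
    (fun A _ _ => (hi1.add hi2).integrableOn) (fun A hA _ => ?_)
    hg_meas.stronglyMeasurable.aestronglyMeasurable).symm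
  have hsplit : ∫ ω in A, h (τ ω) ω ∂P
      = ∫ ω in A, {ω' | τ ω' ≤ t}.indicator (fun ω' => h (τ ω') ω') ω ∂P
        + ∫ ω in A, {ω' | t < τ ω'}.indicator (fun ω' => h (τ ω') ω') ω ∂P := by
    rw [← integral_add hi1.integrableOn hi3.integrableOn]
    refine integral_congr_ae (ae_of_all _ fun ω => ?_)
    by_cases hω : τ ω ≤ t
    · simp [indicator, hω, not_lt.2 hω]
    · simp [indicator, hω, not_le.1 hω]
  rw [hsplit]
  refine (integral_add hi1.integrableOn hi2.integrableOn).trans ?_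
  congr 1
  rw [hG] at hA
  obtain ⟨B, hB, hAB⟩ := exists_trace_eq _ _ _ hA
  rw [setIntegral_indicator hSt, setIntegral_indicator hSt, hAB, key1 B hB, key2 B hB]
end
end
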